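/- In the hierarchical graph H_{n,k}, let z^{01} be the vertex whose j-th coordinate is 0 for odd j and 1 for even j, let z^{10} be the vertex whose j-th coordinate is 1 for odd j and 0 for even j, let r = 00…0 be the root, and let P be the set of vertices all of whose coordinates are nonzero. Then the graph distance from z^{10} to r equals k, and the minimum graph distance from z^{01} to a vertex of P equals k. -/

import Mathlib

/-!
Record for each vertex only which coordinates vanish, and prepend a fixed truth value `a`. The
number of places where this word switches between zero and nonzero changes by at most one along
every edge (`chg_le_of_adj`): rule (3) preserves the word, and rules (1) and (2) keep a prefix and
replace a suffix of constant pattern by another such suffix, so only the switch at the start of the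
suffix is affected. With "zero" prepended the root has no switches and `z^{10}` has `k`; with
"nonzero" prepended every peripheral vertex has none and `z^{01}` has `k`. This gives both lower
bounds.

For the upper bounds, collapsing the last run of an alternating word into the preceding run is a
single edge, so the vertices `stair t m` form a path of length `k` from a constant vertex to the
alternating one (`exists_walk_stair`). Since `SimpleGraph.dist` is `0` between unreachable
vertices, the distance to the peripheral set also uses that every peripheral vertex is adjacent to
the root.
-/

/-- Rule (1): the two vertices agree on the first `k-1` coordinates and differ
(hence differ in the last coordinate). -/
def rule1 {n k : ℕ} (x y : Fin k → ZMod n) : Prop :=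
  x ≠ y ∧ ∀ j : Fin k, (j : ℕ) + 1 < k → x j = y j

/-- Rule (2): `x = x_1…x_i 0…0` and `y = x_1…x_i x_{i+1}…x_k` with `x_j ≠ 0` for
`i+1 ≤ j ≤ k`, where `0 ≤ i ≤ k-2` (`i` is the length of the shared prefix,
0-indexed coordinates `≥ i` are zero on the `x` side and nonzero on the `y` side). -/
def rule2 {n k : ℕ} (x y : Fin k → ZMod n) : Prop :=
  ∃ i : ℕ, i + 2 ≤ k ∧ (∀ j : Fin k, (j : ℕ) < i → x j = y j) ∧
    (∀ j : Fin k, i ≤ (j : ℕ) → x j = 0) ∧ (∀ j : Fin k, i ≤ (j : ℕ) → y j ≠ 0)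

/-- Rule (3): `x = x_1…x_{i-1} x_i 0…0` and `y = x_1…x_{i-1} y_i 0…0` with
`x_i, y_i ≠ 0`, `x_i ≠ y_i` and `1 ≤ i ≤ k-1` (here `p` is the 0-indexed
position `i-1`, so `p ≤ k-2`). -/
def rule3 {n k : ℕ} (x y : Fin k → ZMod n) : Prop :=
  ∃ p : Fin k, (p : ℕ) + 2 ≤ k ∧ (∀ j : Fin k, j < p → x j = y j) ∧
    x p ≠ 0 ∧ y p ≠ 0 ∧ x p ≠ y p ∧ (∀ j : Fin k, p < j → x j = 0 ∧ y j = 0)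

/-- The hierarchical graph `H_{n,k}` on the vertex set `(Z_n)^k`, whose adjacency
is given exactly by the three rules above. -/
def hierGraph (n k : ℕ) : SimpleGraph (Fin k → ZMod n) :=
  SimpleGraph.fromRel (fun x y => rule1 x y ∨ rule2 x y ∨ rule3 x y)

/-- The root vertex `00…0` of `H_{n,k}`. -/
def hierRoot (n k : ℕ) : Fin k → ZMod n := fun _ => 0

/-- The set of peripheral vertices of `H_{n,k}`: those all of whose coordinates
are nonzero. -/
def peripheral (n k : ℕ) : Set (Fin k → ZMod n) := {v | ∀ j, v j ≠ 0}

/-- The minimum graph distance from a vertex to a set of vertices. -/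
noncomputable def distToSet {V : Type*} (G : SimpleGraph V) (v : V) (S : Set V) : ℕ :=
  sInf (G.dist v '' S)

/-- The eccentricity of a vertex: the maximum graph distance from it to any vertex. -/
noncomputable def eccentricity {V : Type*} (G : SimpleGraph V) (v : V) : ℕ :=
  sSup (Set.range (G.dist v))

/-- The radius of a graph: the minimum eccentricity over all vertices. -/
noncomputable def graphRadius {V : Type*} (G : SimpleGraph V) : ℕ :=
  sInf (Set.range (eccentricity G))

/-- The degree of a vertex, as the number of its neighbors. -/
noncomputable def vdeg {V : Type*} (G : SimpleGraph V) (v : V) : ℕ :=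
  (G.neighborSet v).ncard

/-- `ε_v`: the number of edges of the graph both of whose endpoints are
neighbors of `v`. -/
noncomputable def localEdges {V : Type*} (G : SimpleGraph V) (v : V) : ℕ :=
  {e : Sym2 V | e ∈ G.edgeSet ∧ ∀ w ∈ e, G.Adj v w}.ncard

/-- The clustering coefficient `c(v) = 2 ε_v / (δ_v (δ_v - 1))` of a vertex `v`. -/
noncomputable def clustering {V : Type*} (G : SimpleGraph V) (v : V) : ℚ :=
  (2 * (localEdges G v : ℚ)) / ((vdeg G v : ℚ) * ((vdeg G v : ℚ) - 1))

/-- The vertex `z^{01} = 0101…` (1-indexed: 0 at odd positions, 1 at even). -/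
def z01 (n k : ℕ) : Fin k → ZMod n := fun j => if (j : ℕ) % 2 = 0 then 0 else 1

/-- The vertex `z^{10} = 1010…` (1-indexed: 1 at odd positions, 0 at even). -/
def z10 (n k : ℕ) : Fin k → ZMod n := fun j => if (j : ℕ) % 2 = 0 then 1 else 0

/-! ### Switches of the zero pattern along edges -/

/-- The zero pattern of `x`, shifted by one, with the truth value `a` prepended: `pat a x 0` is
`a` and `pat a x (j + 1)` says that the coordinate at `j` is zero (true by convention for `j`
beyond the length of `x`). -/
def pat {n k : ℕ} (a : Prop) (x : Fin k → ZMod n) : ℕ → Prop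
  | 0 => a
  | j + 1 => ∀ h : j < k, x ⟨j, h⟩ = 0

open Classical in
/-- The positions where the zero pattern of `x`, with `a` prepended, switches. -/
noncomputable def chg {n k : ℕ} (a : Prop) (x : Fin k → ZMod n) : Finset ℕ :=
  (Finset.range k).filter fun j => ¬ (pat a x j ↔ pat a x (j + 1))

theorem chg_card_le {n k : ℕ} (a : Prop) (x y : Fin k → ZMod n) (p : ℕ)
    (h : ∀ j < k, j ≠ p → ((pat a x j ↔ pat a x (j + 1)) ↔ (pat a y j ↔ pat a y (j + 1)))) :
    (chg a x).card ≤ (chg a y).card + 1 := by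
  classical
  refine le_trans (Finset.card_le_card (t := insert p (chg a y)) ?_) (Finset.card_insert_le _ _)
  intro j hj
  simp only [chg, Finset.mem_filter, Finset.mem_range, Finset.mem_insert] at hj ⊢
  by_cases hp : j = p
  · exact Or.inl hp
  · exact Or.inr ⟨hj.1, fun h' => hj.2 ((h j hj.1 hp).2 h')⟩

/-- Two vertices whose zero patterns agree before position `p` and are each constant from `p` on
have the same switches away from `p`. -/
theorem pat_switch {n k : ℕ} (a : Prop) (x y : Fin k → ZMod n) (p : ℕ)
    (h1 : ∀ j : Fin k, (j : ℕ) < p → (x j = 0 ↔ y j = 0))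
    (h2 : ∀ i j : Fin k, p ≤ (i : ℕ) → p ≤ (j : ℕ) → (x i = 0 ↔ x j = 0))
    (h3 : ∀ i j : Fin k, p ≤ (i : ℕ) → p ≤ (j : ℕ) → (y i = 0 ↔ y j = 0)) :
    ∀ j < k, j ≠ p → ((pat a x j ↔ pat a x (j + 1)) ↔ (pat a y j ↔ pat a y (j + 1))) := by
  intro j hj hp
  rcases j with _ | j
  · have := h1 ⟨0, hj⟩ (by simp; omega)
    simp [pat, hj, this]
  · have hj' : j < k := by omega
    simp only [pat, hj, hj', forall_true_left]
    rcases Nat.lt_or_ge (j + 1) p with hlt | hge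
    · rw [h1 ⟨j, hj'⟩ (by simp; omega), h1 ⟨j + 1, hj⟩ hlt]
    · have hx := h2 ⟨j, hj'⟩ ⟨j + 1, hj⟩ (by simp; omega) hge
      have hy := h3 ⟨j, hj'⟩ ⟨j + 1, hj⟩ (by simp; omega) hge
      tauto

theorem exists_pat_switch {n k : ℕ} (a : Prop) (x y : Fin k → ZMod n)
    (h : rule1 x y ∨ rule2 x y ∨ rule3 x y) :
    ∃ p, ∀ j < k, j ≠ p →
      ((pat a x j ↔ pat a x (j + 1)) ↔ (pat a y j ↔ pat a y (j + 1))) := by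
  rcases h with ⟨-, h⟩ | ⟨i, -, h1, h2, h3⟩ | ⟨p, -, h1, h2, h3, -, h4⟩
  · refine ⟨k - 1, pat_switch a x y _ (fun j hj => by rw [h j (by omega)]) ?_ ?_⟩ <;>
    · intro i j hi hj
      have : i = j := Fin.ext (by omega)
      rw [this]
  · refine ⟨i, pat_switch a x y i (fun j hj => by rw [h1 j hj]) ?_ ?_⟩
    · intro i j hi hj
      simp [h2 i hi, h2 j hj]
    · intro i j hi hj
      simp [h3 i hi, h3 j hj]
  · -- the zero patterns coincide everywhere, so the position `k` past the end may be used
    refine ⟨k, pat_switch a x y k (fun j _ => ?_) ?_ ?_⟩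
    · rcases lt_trichotomy j p with hj | rfl | hj
      · rw [h1 j hj]
      · simp [h2, h3]
      · simp [h4 j hj]
    · intro i j hi
      omega
    · intro i j hi
      omega

theorem chg_le_of_adj {n k : ℕ} (a : Prop) {x y : Fin k → ZMod n}
    (h : (hierGraph n k).Adj x y) : (chg a x).card ≤ (chg a y).card + 1 := by
  rw [hierGraph, SimpleGraph.fromRel_adj] at h
  rcases h.2 with h | h
  · obtain ⟨p, hp⟩ := exists_pat_switch a x y h
    exact chg_card_le a x y p hp
  · obtain ⟨p, hp⟩ := exists_pat_switch a y x h
    exact chg_card_le a x y p fun j hj hjp => (hp j hj hjp).symm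

theorem chg_le_of_walk {n k : ℕ} (a : Prop) {x y : Fin k → ZMod n}
    (w : (hierGraph n k).Walk x y) : (chg a x).card ≤ (chg a y).card + w.length := by
  induction w with
  | nil => simp
  | cons h w ih =>
    have := chg_le_of_adj a h
    rw [SimpleGraph.Walk.length_cons]
    omega

theorem chg_le_of_reachable {n k : ℕ} (a : Prop) {x y : Fin k → ZMod n}
    (h : (hierGraph n k).Reachable x y) :
    (chg a x).card ≤ (chg a y).card + (hierGraph n k).dist x y := by
  obtain ⟨w, hw⟩ := h.exists_walk_length_eq_dist
  rw [← hw]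
  exact chg_le_of_walk a w

/-! ### Paths through the alternating words -/

/-- Replacing a nonempty all-zero suffix by an all-nonzero one is an edge: by rule (1) for a
suffix of length one, and by rule (2) otherwise. -/
theorem adj_of_suffix {n k : ℕ} {x y : Fin k → ZMod n} (m : ℕ) (hm : m < k)
    (h1 : ∀ j : Fin k, (j : ℕ) < m → x j = y j)
    (h2 : ∀ j : Fin k, m ≤ (j : ℕ) → x j = 0) (h3 : ∀ j : Fin k, m ≤ (j : ℕ) → y j ≠ 0) :
    (hierGraph n k).Adj x y := by
  have hne : x ≠ y := by
    rintro rfl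
    exact h3 ⟨m, hm⟩ le_rfl (h2 ⟨m, hm⟩ le_rfl)
  rw [hierGraph, SimpleGraph.fromRel_adj]
  refine ⟨hne, Or.inl ?_⟩
  rcases Nat.lt_or_ge (m + 1) k with h | h
  · exact Or.inr (Or.inl ⟨m, h, h1, h2, h3⟩)
  · exact Or.inl ⟨hne, fun j hj => h1 j (by omega)⟩

/-- The alternating word of `0`s and `1`s, starting with `0` for even `t` and `1` for odd `t`. -/
def alt (n t j : ℕ) : ZMod n := if (j + t) % 2 = 0 then 0 else 1

/-- The vertex following the alternating word `alt n t` (its initial letter being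
prepended, as in `pat`) up to index `m`, and constant afterwards. -/
def stair (n k t m : ℕ) : Fin k → ZMod n := fun j => alt n t (min ((j : ℕ) + 1) m)

theorem stair_adj {n k : ℕ} (hn : 2 ≤ n) (t m : ℕ) (hm : m < k) :
    (hierGraph n k).Adj (stair n k t (m + 1)) (stair n k t m) := by
  have : Fact (1 < n) := ⟨hn⟩
  have e0 : ∀ j : Fin k, (j : ℕ) < m → stair n k t m j = stair n k t (m + 1) j := by
    intro j hj
    simp only [stair]
    rw [min_eq_left (by omega), min_eq_left (by omega)]
  have e1 : ∀ j : Fin k, m ≤ (j : ℕ) → stair n k t m j = alt n t m := by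
    intro j hj
    simp only [stair]
    rw [min_eq_right (by omega)]
  have e2 : ∀ j : Fin k, m ≤ (j : ℕ) → stair n k t (m + 1) j = alt n t (m + 1) := by
    intro j hj
    simp only [stair]
    rw [min_eq_right (by omega)]
  rcases Nat.mod_two_eq_zero_or_one (m + t) with h | h
  · refine (adj_of_suffix m hm e0 (fun j hj => ?_) (fun j hj => ?_)).symm
    · rw [e1 j hj, alt, if_pos h]
    · rw [e2 j hj, alt, if_neg (by omega)]
      exact one_ne_zero
  · refine adj_of_suffix m hm (fun j hj => (e0 j hj).symm) (fun j hj => ?_) (fun j hj => ?_)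
    · rw [e2 j hj, alt, if_pos (by omega)]
    · rw [e1 j hj, alt, if_neg (by omega)]
      exact one_ne_zero

theorem exists_walk_stair {n k : ℕ} (hn : 2 ≤ n) (t m : ℕ) (hm : m ≤ k) :
    ∃ w : (hierGraph n k).Walk (stair n k t m) (stair n k t 0), w.length = m := by
  induction m with
  | zero => exact ⟨SimpleGraph.Walk.nil, rfl⟩
  | succ m ih =>
    obtain ⟨w, hw⟩ := ih (by omega)
    exact ⟨SimpleGraph.Walk.cons (stair_adj hn t m hm) w, by simp [hw]⟩

theorem z10_eq (n k : ℕ) : z10 n k = stair n k 0 k := by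
  funext j
  have := j.2
  simp only [z10, stair, alt]
  rw [min_eq_left (by omega)]
  rcases Nat.mod_two_eq_zero_or_one (j : ℕ) with h | h
  · rw [if_pos h, if_neg (by omega)]
  · rw [if_neg (by omega), if_pos (by omega)]

theorem z01_eq (n k : ℕ) : z01 n k = stair n k 1 k := by
  funext j
  have := j.2
  simp only [z01, stair, alt]
  rw [min_eq_left (by omega)]
  rcases Nat.mod_two_eq_zero_or_one (j : ℕ) with h | h
  · rw [if_pos h, if_pos (by omega)]
  · rw [if_neg (by omega), if_neg (by omega)]

/-! ### Switch counts of the alternating and constant words -/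

theorem chg_stair {n k : ℕ} (hn : 2 ≤ n) (t : ℕ) :
    (chg (t % 2 = 0) (stair n k t k)).card = k := by
  have : Fact (1 < n) := ⟨hn⟩
  have key : ∀ j ≤ k, (pat (t % 2 = 0) (stair n k t k) j ↔ (j + t) % 2 = 0) := by
    intro j hj
    rcases j with _ | j
    · simp [pat]
    · have hj' : j < k := hj
      simp only [pat, stair, alt, hj', forall_true_left]
      rw [min_eq_left (by omega)]
      split_ifs with h <;> simp [h]
  have : chg (t % 2 = 0) (stair n k t k) = Finset.range k := by
    classical
    rw [chg, Finset.filter_eq_self]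
    intro j hj
    rw [Finset.mem_range] at hj
    rw [key j (by omega), key (j + 1) (by omega)]
    omega
  rw [this, Finset.card_range]

theorem chg_const {n k : ℕ} (a : Prop) (x : Fin k → ZMod n) (h : ∀ j, (x j = 0 ↔ a)) :
    (chg a x).card = 0 := by
  classical
  rw [Finset.card_eq_zero, chg, Finset.filter_eq_empty_iff]
  intro j hj
  rw [Finset.mem_range] at hj
  have key : ∀ j ≤ k, (pat a x j ↔ a) := by
    intro j hj
    rcases j with _ | j
    · simp [pat]
    · have hj' : j < k := hj
      simp [pat, hj', h]
  rw [key j (by omega), key (j + 1) (by omega)]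
  simp

/-- `∂_k(z^{10}, r) = ∂_k(z^{01}, P) = k`. -/
theorem hierGraph_dist_z10_root_and_z01_P (n k : ℕ) (hn : 2 ≤ n) (hk : 1 ≤ k) :
    (hierGraph n k).dist (z10 n k) (hierRoot n k) = k ∧
      distToSet (hierGraph n k) (z01 n k) (peripheral n k) = k := by
  have : Fact (1 < n) := ⟨hn⟩
  constructor
  · have hr : hierRoot n k = stair n k 0 0 := by
      funext j
      simp [hierRoot, stair, alt]
    rw [z10_eq, hr]
    obtain ⟨w, hw⟩ := exists_walk_stair hn 0 k le_rfl
    apply le_antisymm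
    · exact (SimpleGraph.dist_le w).trans hw.le
    · have h := chg_le_of_reachable (0 % 2 = 0) w.reachable
      rw [chg_stair hn, chg_const _ (stair n k 0 0) (fun j => by simp [stair, alt])] at h
      omega
  · have hp : stair n k 1 0 ∈ peripheral n k := by
      intro j
      simp [stair, alt]
    have hroot : ∀ y ∈ peripheral n k, (hierGraph n k).Adj (hierRoot n k) y := fun y hy =>
      adj_of_suffix 0 hk (fun j hj => absurd hj (Nat.not_lt_zero _)) (fun _ _ => rfl)
        (fun j _ => hy j)
    obtain ⟨w, hw⟩ := exists_walk_stair (k := k) hn 1 k le_rfl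
    have hlow : ∀ y ∈ peripheral n k, k ≤ (hierGraph n k).dist (stair n k 1 k) y := by
      intro y hy
      have h := chg_le_of_reachable (1 % 2 = 0)
        ((w.reachable.trans (hroot _ hp).symm.reachable).trans (hroot y hy).reachable)
      rw [chg_stair hn, chg_const _ y (fun j => by simp [hy j])] at h
      omega
    rw [z01_eq, distToSet]
    apply le_antisymm
    · exact (Nat.sInf_le (Set.mem_image_of_mem _ hp)).trans ((SimpleGraph.dist_le w).trans hw.le)
    · refine le_csInf ⟨_, Set.mem_image_of_mem _ hp⟩ ?_
      rintro _ ⟨y, hy, rfl⟩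
      exact hlow y hy
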